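/- arXiv:2509.24794 — 2 statements merged into one kernel-verified Lean document; each statement's English description precedes it below -/
import Mathlib

section
/- Let C ⊆ F_2^n be a binary linear code with minimum distance at least 2t+1, and let u, e, e_1, r be natural numbers with u + e − e_1 > t. Then the number of triples (U, E, p) with |U| = u, |E| = e, U ∩ E = ∅, and wt(p) = e_1, for which there exists a codeword c ∈ C with wt(c) = r, d(y^(2), c) ≤ t, and d_E(c) < d_E(0) = u, equals A_r · Σ_{(a,b) ∈ S_{a,b}} Σ_{(λ,γ) ∈ (S_λ × S_γ) ∩ S_<} C(r,a)·C(n−r,b)·C(n−r−b,λ)·C(b,γ)·C(r−a, e−e_1−γ)·C(a, e_1−λ), where S_{a,b} = {(a,b) : a + b ≤ t, r + b = u + e − e_1 + a}, S_λ = {λ : λ ≤ n−r−b, e_1 − λ ≤ a}, S_γ = {γ : γ ≤ b, e − e_1 − γ ≤ r − a}, and S_< = {(λ,γ) : (b − γ) + (a − (e_1 − λ)) < u}. -/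
/-- First test pattern: erasures filled with `p`. -/
def testPattern1 {n : ℕ} (U E : Finset (Fin n)) (p : Fin n → ZMod 2) :
    Fin n → ZMod 2 :=
  fun j => if j ∈ U then 1 else if j ∈ E then p j else 0

/-- Second test pattern: erasures filled with the complementary pattern `1 + p`. -/
def testPattern2 {n : ℕ} (U E : Finset (Fin n)) (p : Fin n → ZMod 2) :
    Fin n → ZMod 2 :=
  fun j => if j ∈ U then 1 else if j ∈ E then 1 + p j else 0

/-- The erased distance `d_E(c) = |{i ∉ E : c_i ≠ y_i}|`, where `y_i = 1` for `i ∈ U`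
and `y_i = 0` for `i ∉ U ∪ E`. -/
def erasedDist {n : ℕ} (U E : Finset (Fin n)) (c : Fin n → ZMod 2) : ℕ :=
  (Finset.univ.filter
    (fun i => i ∉ E ∧ c i ≠ (if i ∈ U then (1 : ZMod 2) else 0))).card

/-- Binomial coefficient with an integer lower argument (zero when negative). -/
def chooseZ (m : ℕ) (k : ℤ) : ℕ := if 0 ≤ k then m.choose k.toNat else 0

open Finset in
theorem aux_cnt {n : ℕ} (X R : Finset (Fin n)) (i j : ℕ) :
    (univ.filter fun S : Finset (Fin n) => S ⊆ X ∧ #(S ∩ R) = i ∧ #(S \ R) = j).card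
      = (#(X ∩ R)).choose i * (#(X \ R)).choose j := by
  rw [← card_powersetCard, ← card_powersetCard, ← card_product]
  refine card_nbij' (fun S => (S ∩ R, S \ R)) (fun q => q.1 ∪ q.2) ?_ ?_ ?_ ?_
  · intro S hS
    simp only [coe_filter, mem_univ, true_and, Set.mem_ofPred_eq] at hS
    simp only [coe_product, Set.mem_prod, mem_coe, mem_powersetCard]
    exact ⟨⟨inter_subset_inter_right hS.1, hS.2.1⟩, ⟨sdiff_subset_sdiff hS.1 subset_rfl, hS.2.2⟩⟩
  · rintro ⟨P, Q⟩ hq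
    simp only [coe_product, Set.mem_prod, mem_coe, mem_powersetCard] at hq
    obtain ⟨⟨h1, h2⟩, h3, h4⟩ := hq
    simp only [coe_filter, mem_univ, true_and, Set.mem_ofPred_eq]
    have e1 : (P ∪ Q) ∩ R = P := by
      ext x; have := @h1 x; have := @h3 x; simp at *; grind
    have e2 : (P ∪ Q) \ R = Q := by
      ext x; have := @h1 x; have := @h3 x; simp at *; grind
    refine ⟨?_, by rw [e1, h2], by rw [e2, h4]⟩
    intro x; have := @h1 x; have := @h3 x; simp at *; grind
  · intro S _
    ext x; simp; tauto
  · rintro ⟨P, Q⟩ hq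
    simp only [coe_product, Set.mem_prod, mem_coe, mem_powersetCard] at hq
    obtain ⟨⟨h1, h2⟩, h3, h4⟩ := hq
    simp only [Prod.mk.injEq]
    constructor
    · ext x; have := @h1 x; have := @h3 x; simp at *; grind
    · ext x; have := @h1 x; have := @h3 x; simp at *; grind

open Finset in
theorem aux_cntZ {n : ℕ} (X R : Finset (Fin n)) (k : ℤ) (j : ℕ) :
    (univ.filter fun S : Finset (Fin n) => S ⊆ X ∧ (#S : ℤ) = k ∧ #(S \ R) = j).card
      = (#(X \ R)).choose j * chooseZ (#(X ∩ R)) (k - j) := by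
  unfold chooseZ
  split_ifs with hk
  · rw [mul_comm, ← aux_cnt]
    congr 1
    ext S
    have := card_inter_add_card_sdiff S R
    simp only [mem_filter, mem_univ, true_and]
    constructor
    · rintro ⟨h1, h2, h3⟩; exact ⟨h1, by omega, h3⟩
    · rintro ⟨h1, h2, h3⟩; exact ⟨h1, by omega, h3⟩
  · rw [mul_zero, card_eq_zero, filter_eq_empty_iff]
    rintro S _ ⟨h1, h2, h3⟩
    have := card_inter_add_card_sdiff S R
    omega

open Finset in
theorem aux_fiber {n : ℕ} (R : Finset (Fin n)) (e e₁ r a b l g : ℕ) (hr : #R = r) :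
    (univ.filter fun q : Finset (Fin n) × Finset (Fin n) × Finset (Fin n) =>
      q.2.1 ⊆ q.1ᶜ ∧ q.2.2 ⊆ q.1 ∧ #(R \ q.1) = a ∧ #(q.1 \ R) = b ∧
      #(q.2.1 \ R) = l ∧ #(q.2.2 \ R) = g ∧ (#q.2.1 : ℤ) = e₁ ∧ (#q.2.2 : ℤ) = (e : ℤ) - e₁).card
    = r.choose a * (n - r).choose b * (n - r - b).choose l *
        b.choose g * chooseZ (r - a) ((e : ℤ) - e₁ - g) * chooseZ a ((e₁ : ℤ) - l) := by
  by_cases har : a ≤ r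
  swap
  · rw [Nat.choose_eq_zero_of_lt (by omega)]
    simp only [zero_mul]
    rw [card_eq_zero, filter_eq_empty_iff]
    rintro q _ ⟨_, _, h3, _⟩
    have := card_le_card (sdiff_subset : R \ q.1 ⊆ R)
    omega
  have hY : (univ.filter fun Y : Finset (Fin n) => #(R \ Y) = a ∧ #(Y \ R) = b).card
      = r.choose a * (n - r).choose b := by
    have h0 := aux_cnt univ R (r - a) b
    rw [univ_inter, hr, Nat.choose_symm har] at h0
    have : #(univ \ R) = n - r := by
      rw [← compl_eq_univ_sdiff, card_compl, hr, Fintype.card_fin]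
    rw [this] at h0
    rw [← h0]
    congr 1
    ext Y
    have h1 := card_inter_add_card_sdiff R Y
    rw [inter_comm] at h1
    simp only [mem_filter, mem_univ, true_and, subset_univ]
    constructor
    · rintro ⟨h2, h3⟩; exact ⟨by omega, h3⟩
    · rintro ⟨h2, h3⟩; exact ⟨by omega, h3⟩
  rw [card_eq_sum_card_fiberwise (f := Prod.fst)
    (t := univ.filter fun Y : Finset (Fin n) => #(R \ Y) = a ∧ #(Y \ R) = b)]
  swap
  · intro q hq
    simp only [coe_filter, mem_univ, true_and, Set.mem_ofPred_eq] at hq ⊢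
    exact ⟨hq.2.2.1, hq.2.2.2.1⟩
  have key : ∀ Y ∈ (univ.filter fun Y : Finset (Fin n) => #(R \ Y) = a ∧ #(Y \ R) = b),
      #{q ∈ (univ.filter fun q : Finset (Fin n) × Finset (Fin n) × Finset (Fin n) =>
      q.2.1 ⊆ q.1ᶜ ∧ q.2.2 ⊆ q.1 ∧ #(R \ q.1) = a ∧ #(q.1 \ R) = b ∧
      #(q.2.1 \ R) = l ∧ #(q.2.2 \ R) = g ∧ (#q.2.1 : ℤ) = e₁ ∧ (#q.2.2 : ℤ) = (e : ℤ) - e₁)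
        | q.1 = Y} = ((n - r - b).choose l * chooseZ a ((e₁ : ℤ) - l)) *
        (b.choose g * chooseZ (r - a) ((e : ℤ) - e₁ - g)) := by
    intro Y hYm
    simp only [mem_filter, mem_univ, true_and] at hYm
    obtain ⟨ha, hb⟩ := hYm
    have c1 := aux_cntZ Yᶜ R e₁ l
    have c2 := aux_cntZ Y R ((e : ℤ) - e₁) g
    have s1 : Yᶜ ∩ R = R \ Y := by ext x; simp; tauto
    have s2 : #(Yᶜ \ R) = n - r - b := by
      have : Yᶜ \ R = (R ∪ (Y \ R))ᶜ := by ext x; simp; tauto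
      rw [this, card_compl, Fintype.card_fin, card_union_of_disjoint disjoint_sdiff, hr, hb]
      omega
    have s3 : #(Y ∩ R) = r - a := by
      have h1 := card_inter_add_card_sdiff R Y
      rw [inter_comm] at h1
      omega
    rw [s1, ha, s2] at c1
    rw [s3, hb] at c2
    rw [← c1, ← c2, ← card_product]
    refine card_nbij' (fun q => q.2) (fun q => (Y, q)) ?_ ?_ ?_ ?_
    · rintro ⟨Y', P, Q⟩ hq
      simp only [coe_filter, mem_filter, mem_univ, true_and, Set.mem_ofPred_eq] at hq
      obtain ⟨⟨h1, h2, h3, h4, h5, h6, h7, h8⟩, rfl⟩ := hq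
      simp only [coe_product, Set.mem_prod, coe_filter, mem_univ, true_and, Set.mem_ofPred_eq]
      exact ⟨⟨h1, h7, h5⟩, h2, h8, h6⟩
    · rintro ⟨P, Q⟩ hq
      simp only [coe_product, Set.mem_prod, coe_filter, mem_univ, true_and, Set.mem_ofPred_eq] at hq
      obtain ⟨⟨h1, h7, h5⟩, h2, h8, h6⟩ := hq
      simp only [coe_filter, mem_filter, mem_univ, true_and, Set.mem_ofPred_eq]
      exact ⟨⟨h1, h2, ha, hb, h5, h6, h7, h8⟩, trivial⟩
    · rintro ⟨Y', P, Q⟩ hq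
      simp only [coe_filter, mem_filter, mem_univ, true_and, Set.mem_ofPred_eq] at hq
      simp [hq.2]
    · intro q _; rfl
  rw [sum_congr rfl key, sum_const, hY, smul_eq_mul]
  ring

open Finset in
theorem aux_Q {n t : ℕ} (R : Finset (Fin n)) (u e e₁ r : ℕ) (hr : #R = r) :
    (univ.filter fun q : Finset (Fin n) × Finset (Fin n) × Finset (Fin n) =>
      q.2.1 ⊆ q.1ᶜ ∧ q.2.2 ⊆ q.1 ∧ #q.2.1 = e₁ ∧ #q.2.2 + e₁ = e ∧ #q.1 + e₁ = u + e ∧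
      #(R \ q.1) + #(q.1 \ R) ≤ t ∧ #((R \ q.1) \ q.2.1) + #((q.1 \ R) \ q.2.2) < u).card
    = ∑ ab ∈ (Finset.range (t + 1) ×ˢ Finset.range (t + 1)).filter
            (fun ab => ab.1 + ab.2 ≤ t ∧
              (r : ℤ) + ab.2 = u + e - e₁ + ab.1),
          ∑ lg ∈ (Finset.range (n + 1) ×ˢ Finset.range (n + 1)).filter
              (fun lg =>
                ((lg.1 : ℤ) ≤ n - r - ab.2 ∧ (e₁ : ℤ) - lg.1 ≤ ab.1) ∧
                ((lg.2 : ℤ) ≤ ab.2 ∧ (e : ℤ) - e₁ - lg.2 ≤ (r : ℤ) - ab.1) ∧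
                ((ab.2 : ℤ) - lg.2 + ((ab.1 : ℤ) - ((e₁ : ℤ) - lg.1)) < u)),
            r.choose ab.1 * (n - r).choose ab.2 * (n - r - ab.2).choose lg.1 *
              ab.2.choose lg.2 * chooseZ (r - ab.1) ((e : ℤ) - e₁ - lg.2) *
              chooseZ ab.1 ((e₁ : ℤ) - lg.1) := by
  -- cardinality facts
  have facts : ∀ Y P Q : Finset (Fin n), P ⊆ Yᶜ → Q ⊆ Y →
      #Y + #(R \ Y) = r + #(Y \ R) ∧
      #((R \ Y) \ P) + #P = #(R \ Y) + #(P \ R) ∧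
      #((Y \ R) \ Q) + #(Q \ R) = #(Y \ R) ∧
      #(P \ R) + r + #(Y \ R) ≤ n ∧
      #P ≤ #(P \ R) + #(R \ Y) ∧
      #Q + #(R \ Y) ≤ #(Q \ R) + r := by
    intro Y P Q hP hQ
    have h1 := card_inter_add_card_sdiff R Y
    have h2 := card_inter_add_card_sdiff Y R
    rw [inter_comm] at h2
    have h3 := card_inter_add_card_sdiff P R
    have h4 := card_inter_add_card_sdiff Q R
    have h5 := card_inter_add_card_sdiff (R \ Y) P
    have h6 := card_inter_add_card_sdiff (Y \ R) Q
    have h7 : (R \ Y) ∩ P = P ∩ R := by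
      ext x; have := @hP x; simp at *; tauto
    have h8 : (Y \ R) ∩ Q = Q \ R := by
      ext x; have := @hQ x; simp at *; tauto
    have h9 : #(Q ∩ R) ≤ #(R ∩ Y) := card_le_card (by
      intro x; have := @hQ x; simp at *; tauto)
    have h10 : #((P \ R) ∪ (R ∪ (Y \ R))) ≤ n := (card_le_univ _).trans (by simp)
    rw [card_union_of_disjoint, card_union_of_disjoint disjoint_sdiff] at h10
    swap
    · rw [disjoint_left]; intro x; have := @hP x; simp at *; tauto
    rw [h7] at h5
    rw [h8] at h6
    omega
  rw [card_eq_sum_card_fiberwise (f := fun q => (#(R \ q.1), #(q.1 \ R)))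
    (t := (Finset.range (t + 1) ×ˢ Finset.range (t + 1)).filter
            (fun ab => ab.1 + ab.2 ≤ t ∧ (r : ℤ) + ab.2 = u + e - e₁ + ab.1))]
  swap
  · rintro ⟨Y, P, Q⟩ hq
    simp only [coe_filter, mem_univ, true_and, Set.mem_ofPred_eq, mem_product, mem_range] at hq ⊢
    obtain ⟨q1, q2, q3, q4, q5, q6, q7⟩ := hq
    have := facts Y P Q q1 q2
    omega
  refine sum_congr rfl ?_
  rintro ⟨a, b⟩ hab
  simp only [mem_filter, mem_product, mem_range] at hab
  rw [card_eq_sum_card_fiberwise (f := fun q => (#(q.2.1 \ R), #(q.2.2 \ R)))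
    (t := (Finset.range (n + 1) ×ˢ Finset.range (n + 1)).filter
              (fun lg =>
                ((lg.1 : ℤ) ≤ n - r - b ∧ (e₁ : ℤ) - lg.1 ≤ a) ∧
                ((lg.2 : ℤ) ≤ b ∧ (e : ℤ) - e₁ - lg.2 ≤ (r : ℤ) - a) ∧
                ((b : ℤ) - lg.2 + ((a : ℤ) - ((e₁ : ℤ) - lg.1)) < u)))]
  swap
  · rintro ⟨Y, P, Q⟩ hq
    simp only [coe_filter, mem_filter, mem_univ, true_and, Set.mem_ofPred_eq, mem_product,
      mem_range, Prod.mk.injEq] at hq ⊢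
    obtain ⟨⟨q1, q2, q3, q4, q5, q6, q7⟩, q8, q9⟩ := hq
    have := facts Y P Q q1 q2
    omega
  refine sum_congr rfl ?_
  rintro ⟨l, g⟩ hlg
  simp only [mem_filter, mem_product, mem_range] at hlg
  rw [← aux_fiber R e e₁ r a b l g hr]
  congr 1
  ext ⟨Y, P, Q⟩
  simp only [mem_filter, mem_univ, true_and, Prod.mk.injEq]
  constructor
  · rintro ⟨⟨⟨q1, q2, q3, q4, q5, q6, q7⟩, q8, q9⟩, q10, q11⟩
    exact ⟨q1, q2, q8, q9, q10, q11, by omega, by omega⟩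
  · rintro ⟨q1, q2, q8, q9, q10, q11, q3, q4⟩
    have := facts Y P Q q1 q2
    refine ⟨⟨⟨q1, q2, ?_, ?_, ?_, ?_, ?_⟩, q8, q9⟩, q10, q11⟩ <;> omega

theorem aux_z2 (x : ZMod 2) : x = 0 ∨ x = 1 := by
  revert x; decide

open Finset in
theorem aux_dist {n : ℕ} (U E : Finset (Fin n)) (p c : Fin n → ZMod 2) :
    hammingDist (testPattern2 U E p) c =
      #((univ.filter fun i => c i ≠ 0) \ (U ∪ (E \ univ.filter fun i => p i ≠ 0))) +
      #((U ∪ (E \ univ.filter fun i => p i ≠ 0)) \ (univ.filter fun i => c i ≠ 0)) := by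
  rw [← card_union_of_disjoint disjoint_sdiff_sdiff]
  unfold hammingDist testPattern2
  congr 1
  ext i
  simp only [mem_filter, mem_univ, true_and, mem_union, mem_sdiff]
  have h11 : (1 + 1 : ZMod 2) = 0 := by decide
  by_cases hU : i ∈ U <;> by_cases hE : i ∈ E <;>
    rcases aux_z2 (p i) with hp | hp <;> rcases aux_z2 (c i) with hc | hc <;>
    simp [hU, hE, hp, hc, h11]

open Finset in
theorem aux_er {n : ℕ} (U E : Finset (Fin n)) (p c : Fin n → ZMod 2) (hUE : Disjoint U E)
    (hp : ∀ i ∉ E, p i = 0) :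
    erasedDist U E c =
      #(((univ.filter fun i => c i ≠ 0) \ (U ∪ (E \ univ.filter fun i => p i ≠ 0)))
        \ (univ.filter fun i => p i ≠ 0)) +
      #(((U ∪ (E \ univ.filter fun i => p i ≠ 0)) \ (univ.filter fun i => c i ≠ 0)) \
        (E \ univ.filter fun i => p i ≠ 0)) := by
  rw [← card_union_of_disjoint (disjoint_sdiff_sdiff.mono sdiff_subset sdiff_subset)]
  unfold erasedDist
  congr 1
  ext i
  have h1 := hp i
  have h2 : i ∈ U → i ∉ E := fun h => disjoint_left.1 hUE h
  simp only [mem_filter, mem_univ, true_and, mem_union, mem_sdiff]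
  by_cases hU : i ∈ U <;> by_cases hE : i ∈ E <;>
    rcases aux_z2 (p i) with hp | hp <;> rcases aux_z2 (c i) with hc | hc <;>
    simp_all

open Finset in
theorem aux_T {n t : ℕ} (c : Fin n → ZMod 2) (u e e₁ : ℕ) :
    (univ.filter fun T : Finset (Fin n) × Finset (Fin n) × (Fin n → ZMod 2) =>
          T.1.card = u ∧ T.2.1.card = e ∧ Disjoint T.1 T.2.1 ∧
          (∀ i ∉ T.2.1, T.2.2 i = 0) ∧ hammingNorm T.2.2 = e₁ ∧
            hammingDist (testPattern2 T.1 T.2.1 T.2.2) c ≤ t ∧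
            erasedDist T.1 T.2.1 c < u).card =
    (univ.filter fun q : Finset (Fin n) × Finset (Fin n) × Finset (Fin n) =>
      q.2.1 ⊆ q.1ᶜ ∧ q.2.2 ⊆ q.1 ∧ #q.2.1 = e₁ ∧ #q.2.2 + e₁ = e ∧ #q.1 + e₁ = u + e ∧
      #((univ.filter fun i => c i ≠ 0) \ q.1) + #(q.1 \ (univ.filter fun i => c i ≠ 0)) ≤ t ∧
      #(((univ.filter fun i => c i ≠ 0) \ q.1) \ q.2.1) +
        #((q.1 \ (univ.filter fun i => c i ≠ 0)) \ q.2.2) < u).card := by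
  have hind : ∀ P : Finset (Fin n),
      (univ.filter fun i => (if i ∈ P then (1 : ZMod 2) else 0) ≠ 0) = P := by
    intro P; ext i; simp
  refine card_nbij' (fun T => (T.1 ∪ (T.2.1 \ univ.filter fun i => T.2.2 i ≠ 0),
      (univ.filter fun i => T.2.2 i ≠ 0), T.2.1 \ univ.filter fun i => T.2.2 i ≠ 0))
    (fun q => (q.1 \ q.2.2, q.2.1 ∪ q.2.2, fun i => if i ∈ q.2.1 then 1 else 0)) ?_ ?_ ?_ ?_
  · rintro ⟨U, E, p⟩ hT
    simp only [coe_filter, mem_univ, true_and, Set.mem_ofPred_eq] at hT ⊢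
    obtain ⟨h1, h2, h3, h4, h5, h6, h7⟩ := hT
    rw [aux_dist] at h6
    rw [aux_er U E p c h3 h4] at h7
    have hPE : (univ.filter fun i => p i ≠ 0) ⊆ E := by
      intro i hi
      by_contra hE
      simp [h4 i hE] at hi
    have h5' : #(univ.filter fun i => p i ≠ 0) = e₁ := h5
    generalize (univ.filter fun i => p i ≠ 0) = P at *
    have hc := card_sdiff_add_card_eq_card hPE
    have hd : Disjoint U (E \ P) := h3.mono_right sdiff_subset
    refine ⟨?_, subset_union_right, h5', by omega, ?_, h6, h7⟩
    · intro i hi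
      have := hPE hi
      have := disjoint_right.1 h3 this
      simp [*]
    · rw [card_union_of_disjoint hd]; omega
  · rintro ⟨Y, P, Q⟩ hq
    simp only [coe_filter, mem_univ, true_and, Set.mem_ofPred_eq] at hq ⊢
    obtain ⟨q1, q2, q3, q4, q5, q6, q7⟩ := hq
    have hPQ : Disjoint P Q := by
      rw [disjoint_left]; intro x hx hx'; have := q1 hx; have := q2 hx'; simp_all
    have hd : Disjoint (Y \ Q) (P ∪ Q) := by
      rw [disjoint_left]; intro x hx hx'; have := @q1 x; simp at *; tauto
    have hz : ∀ i ∉ P ∪ Q, (if i ∈ P then (1 : ZMod 2) else 0) = 0 := by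
      intro i hi; simp at hi; simp [hi.1]
    have e1 : (P ∪ Q) \ P = Q := union_sdiff_cancel_left hPQ
    have e2 : (Y \ Q) ∪ Q = Y := sdiff_union_of_subset q2
    rw [aux_dist, aux_er _ _ (fun i => if i ∈ P then (1 : ZMod 2) else 0) c hd hz, hind, e1, e2]
    have hc := card_sdiff_add_card_eq_card q2
    refine ⟨by omega, ?_, hd, hz, ?_, q6, q7⟩
    · rw [card_union_of_disjoint hPQ]; omega
    · unfold hammingNorm; rw [hind, q3]
  · rintro ⟨U, E, p⟩ hT
    simp only [coe_filter, mem_univ, true_and, Set.mem_ofPred_eq] at hT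
    obtain ⟨h1, h2, h3, h4, h5, h6, h7⟩ := hT
    simp only [Prod.mk.injEq]
    refine ⟨?_, ?_, ?_⟩
    · ext i; have := @disjoint_left _ U E; simp; grind
    · ext i; have := h4 i; simp; tauto
    · funext i; rcases aux_z2 (p i) with hp | hp <;> simp [hp]
  · rintro ⟨Y, P, Q⟩ hq
    simp only [coe_filter, mem_univ, true_and, Set.mem_ofPred_eq] at hq
    obtain ⟨q1, q2, q3, q4, q5, q6, q7⟩ := hq
    have hPQ : Disjoint P Q := by
      rw [disjoint_left]; intro x hx hx'; have := q1 hx; have := q2 hx'; simp_all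
    simp only [hind, union_sdiff_cancel_left hPQ, sdiff_union_of_subset q2]

/-- For a binary linear code with minimum distance at least `2t+1`
and `u + e − e₁ > t`, the number of triples `(U, E, p)` for which some codeword `c`
of weight `r` satisfies `d(y⁽²⁾, c) ≤ t` and `d_E(c) < d_E(0) = u` equals
`A_r · ∑_{(a,b) ∈ S_{a,b}} ∑_{(λ,γ) ∈ (S_λ × S_γ) ∩ S_<}
  C(r,a)·C(n−r,b)·C(n−r−b,λ)·C(b,γ)·C(r−a, e−e₁−γ)·C(a, e₁−λ)`. -/
theorem eaed_miscorrection_count_L {n t : ℕ}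
    (C : Submodule (ZMod 2) (Fin n → ZMod 2)) [DecidablePred (· ∈ C)]
    (hdmin : ∀ c ∈ C, c ≠ 0 → 2 * t + 1 ≤ hammingNorm c)
    (u e e₁ r : ℕ) (h : (t : ℤ) < u + e - e₁) :
    (Finset.univ.filter
        (fun T : Finset (Fin n) × Finset (Fin n) × (Fin n → ZMod 2) =>
          T.1.card = u ∧ T.2.1.card = e ∧ Disjoint T.1 T.2.1 ∧
          (∀ i ∉ T.2.1, T.2.2 i = 0) ∧ hammingNorm T.2.2 = e₁ ∧
          ∃ c ∈ C, hammingNorm c = r ∧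
            hammingDist (testPattern2 T.1 T.2.1 T.2.2) c ≤ t ∧
            erasedDist T.1 T.2.1 c < u)).card =
      (Finset.univ.filter
          (fun c : Fin n → ZMod 2 => c ∈ C ∧ hammingNorm c = r)).card *
        ∑ ab ∈ (Finset.range (t + 1) ×ˢ Finset.range (t + 1)).filter
            (fun ab => ab.1 + ab.2 ≤ t ∧
              (r : ℤ) + ab.2 = u + e - e₁ + ab.1),
          ∑ lg ∈ (Finset.range (n + 1) ×ˢ Finset.range (n + 1)).filter
              (fun lg =>
                ((lg.1 : ℤ) ≤ n - r - ab.2 ∧ (e₁ : ℤ) - lg.1 ≤ ab.1) ∧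
                ((lg.2 : ℤ) ≤ ab.2 ∧ (e : ℤ) - e₁ - lg.2 ≤ (r : ℤ) - ab.1) ∧
                ((ab.2 : ℤ) - lg.2 + ((ab.1 : ℤ) - ((e₁ : ℤ) - lg.1)) < u)),
            r.choose ab.1 * (n - r).choose ab.2 * (n - r - ab.2).choose lg.1 *
              ab.2.choose lg.2 * chooseZ (r - ab.1) ((e : ℤ) - e₁ - lg.2) *
              chooseZ ab.1 ((e₁ : ℤ) - lg.1) := by
  classical
  have hcard : ∀ c : Fin n → ZMod 2, hammingNorm c = r → _ := fun c hc =>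
    (aux_T (t := t) c u e e₁).trans (aux_Q (t := t) (Finset.univ.filter fun i => c i ≠ 0) u e e₁ r hc)
  rw [← smul_eq_mul, ← Finset.sum_const]
  rw [Finset.sum_congr rfl (fun c hc =>
    (hcard c (Finset.mem_filter.1 hc).2.2).symm)]
  rw [← Finset.card_biUnion]
  · congr 1
    ext T
    simp only [Finset.mem_filter, Finset.mem_univ, true_and, Finset.mem_biUnion]
    constructor
    · rintro ⟨h1, h2, h3, h4, h5, c, hc, hr, h6, h7⟩
      exact ⟨c, ⟨hc, hr⟩, h1, h2, h3, h4, h5, h6, h7⟩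
    · rintro ⟨c, ⟨hc, hr⟩, h1, h2, h3, h4, h5, h6, h7⟩
      exact ⟨h1, h2, h3, h4, h5, c, hc, hr, h6, h7⟩
  · intro c hc c' hc' hne
    simp only [Finset.coe_filter, Finset.mem_univ, true_and, Set.mem_ofPred_eq,
      Finset.mem_filter] at hc hc'
    simp only [Function.onFun, Finset.disjoint_left, Finset.mem_filter, Finset.mem_univ, true_and]
    rintro T ⟨_, _, _, _, _, h6, _⟩ ⟨_, _, _, _, _, h6', _⟩
    have h1 := hdmin (-c + c') (C.add_mem (C.neg_mem hc.1) hc'.1)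
      (fun h0 => hne (neg_add_eq_zero.1 h0))
    rw [← hammingDist_eq_hammingNorm] at h1
    have h2 := hammingDist_triangle_left c c' (testPattern2 T.1 T.2.1 T.2.2)
    omega
end

section
/- Let C ⊆ F_2^n be a binary linear code with minimum distance at least 2t+1, and let u, e, e_1, r be natural numbers with u + e − e_1 > t. Then the number of triples (U, E, p) with |U| = u, |E| = e, U ∩ E = ∅, and wt(p) = e_1, for which there exists a codeword c ∈ C with wt(c) = r, d(y^(2), c) ≤ t, and d_E(c) = d_E(0) = u, equals A_r · Σ_{(a,b) ∈ S_{a,b}} Σ_{(λ,γ) ∈ (S_λ × S_γ) ∩ S_=} C(r,a)·C(n−r,b)·C(n−r−b,λ)·C(b,γ)·C(r−a, e−e_1−γ)·C(a, e_1−λ), where S_{a,b} = {(a,b) : a + b ≤ t, r + b = u + e − e_1 + a}, S_λ = {λ : λ ≤ n−r−b, e_1 − λ ≤ a}, S_γ = {γ : γ ≤ b, e − e_1 − γ ≤ r − a}, and S_= = {(λ,γ) : (b − γ) + (a − (e_1 − λ)) = u}. -/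
section EaedAux
open Finset

variable {α : Type*} [Fintype α] [DecidableEq α]

def eaedTrip (S : Finset α) (x y z : ℕ) : Finset (Finset α × Finset α × Finset α) :=
  univ.filter fun T => T.1 ⊆ S ∧ T.1.card = x ∧ T.2.1 ⊆ S \ T.1 ∧ T.2.1.card = y ∧
    T.2.2 ⊆ T.1 ∧ T.2.2.card = z

theorem eaedTrip_card (S : Finset α) (x y z : ℕ) :
    (eaedTrip S x y z).card = S.card.choose x * (S.card - x).choose y * x.choose z := by
  have h1 : (eaedTrip S x y z).card =
      ((powersetCard x S).sigma
        (fun X => powersetCard y (S \ X) ×ˢ powersetCard z X)).card := by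
    apply card_nbij' (fun T => ⟨T.1, T.2⟩) (fun T => (T.1, T.2))
    · intro T hT
      simp only [eaedTrip, coe_filter, Set.mem_ofPred_eq, mem_univ, true_and] at hT
      simp only [mem_coe, mem_sigma, mem_product, mem_powersetCard]
      tauto
    · intro T hT
      simp only [mem_coe, mem_sigma, mem_product, mem_powersetCard] at hT
      simp only [eaedTrip, coe_filter, Set.mem_ofPred_eq, mem_univ, true_and]
      tauto
    · intro T _; rfl
    · intro T _; rfl
  rw [h1, card_sigma, sum_congr rfl (g := fun _ => (S.card - x).choose y * x.choose z)]
  · rw [sum_const, card_powersetCard, smul_eq_mul, mul_assoc]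
  · intro X hX
    rw [mem_powersetCard] at hX
    rw [card_product, card_powersetCard, card_powersetCard, card_sdiff_of_subset hX.1, hX.2]

def eaedD (R : Finset α) (t u e e₁ : ℕ) : Finset (Finset α × Finset α × Finset α) :=
  univ.filter fun T => Disjoint T.1 T.2.1 ∧ Disjoint T.1 T.2.2 ∧ Disjoint T.2.1 T.2.2 ∧
    T.1.card = u ∧ T.2.1.card + T.2.2.card = e ∧ T.2.2.card = e₁ ∧
    (R \ (T.1 ∪ T.2.1)).card + ((T.1 ∪ T.2.1) \ R).card ≤ t ∧
    (T.1 \ R).card + (R \ (T.1 ∪ T.2.1 ∪ T.2.2)).card = u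

def eaedI (R : Finset α) (T : Finset α × Finset α × Finset α) :
    (Finset α × Finset α × Finset α) × (Finset α × Finset α × Finset α) :=
  ((R \ (T.1 ∪ T.2.1), T.2.1 ∩ R, T.2.2 ∩ R), ((T.1 ∪ T.2.1) \ R, T.2.2 \ R, T.2.1 \ R))

def eaedJ (R : Finset α)
    (Q : (Finset α × Finset α × Finset α) × (Finset α × Finset α × Finset α)) :
    Finset α × Finset α × Finset α :=
  (((R \ Q.1.1) \ Q.1.2.1) ∪ (Q.2.1 \ Q.2.2.2), Q.1.2.1 ∪ Q.2.2.2, Q.1.2.2 ∪ Q.2.2.1)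

theorem eaed_cards (R U F P : Finset α) (h1 : Disjoint U F) (h2 : Disjoint U P)
    (h3 : Disjoint F P) :
    (R \ (U ∪ F)).card + (U ∩ R).card + (F ∩ R).card = R.card ∧
    ((U ∪ F) \ R).card = (U \ R).card + (F \ R).card ∧
    (U ∩ R).card + (U \ R).card = U.card ∧
    (F ∩ R).card + (F \ R).card = F.card ∧
    (P ∩ R).card + (P \ R).card = P.card ∧
    (R \ (U ∪ F)).card = (R \ (U ∪ F ∪ P)).card + (P ∩ R).card ∧
    ((U ∪ F) \ R).card + (P \ R).card ≤ Rᶜ.card := by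
  refine ⟨?_, ?_, card_inter_add_card_sdiff _ _, card_inter_add_card_sdiff _ _,
    card_inter_add_card_sdiff _ _, ?_, ?_⟩
  · rw [add_assoc, ← card_union_of_disjoint, ← card_union_of_disjoint]
    · congr 1; grind
    · rw [disjoint_left]; grind
    · rw [disjoint_left] at *; grind
  · rw [← card_union_of_disjoint]
    · congr 1; grind
    · rw [disjoint_left] at *; grind
  · rw [← card_union_of_disjoint]
    · congr 1; ext i; rw [disjoint_left] at *; grind
    · rw [disjoint_left] at *; grind
  · rw [← card_union_of_disjoint]
    · apply card_le_card; intro i; simp only [mem_compl]; grind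
    · rw [disjoint_left] at *; grind

theorem eaed_fiber (R : Finset α) (t u e e₁ a b l g m k : ℕ)
    (hab : a + b ≤ t) (hr : R.card + b + e₁ = u + e + a)
    (hm : m + e₁ + g = e) (hk : k + l = e₁) (hu : b + a = u + g + k) :
    ((eaedD R t u e e₁).filter fun T =>
      ((R \ (T.1 ∪ T.2.1)).card, ((T.1 ∪ T.2.1) \ R).card) = (a, b) ∧
      ((T.2.2 \ R).card, (T.2.1 \ R).card) = (l, g)).card =
    (eaedTrip R a m k ×ˢ eaedTrip Rᶜ b l g).card := by
  apply card_nbij' (eaedI R) (eaedJ R)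
  · rintro ⟨U, F, P⟩ hT
    simp only [eaedD, coe_filter, Set.mem_ofPred_eq, mem_filter, mem_univ, true_and,
      Prod.mk.injEq] at hT
    obtain ⟨⟨h1, h2, h3, h4, h5, h6, h7, h8⟩, ⟨h9, h10⟩, h11, h12⟩ := hT
    have hc := eaed_cards R U F P h1 h2 h3
    simp only [mem_coe, mem_product, eaedTrip, mem_filter, mem_univ, true_and, eaedI]
    rw [disjoint_left] at h1 h2 h3
    refine ⟨⟨?_, h9, ?_, ?_, ?_, ?_⟩, ?_, h10, ?_, h11, ?_, h12⟩
    · grind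
    · grind
    · omega
    · grind
    · omega
    · intro i; simp only [mem_compl]; grind
    · intro i; simp only [mem_sdiff, mem_compl]; grind
    · grind
  · rintro ⟨⟨A, M, N⟩, ⟨B, L, G⟩⟩ hT
    simp only [mem_coe, mem_product, eaedTrip, mem_filter, mem_univ, true_and] at hT
    obtain ⟨⟨h1, h2, h3, h4, h5, h6⟩, h7, h8, h9, h10, h11, h12⟩ := hT
    have e1 : ∀ i ∈ B, i ∉ R := fun i hi => by simpa using h7 hi
    have e2 : ∀ i ∈ L, i ∉ R ∧ i ∉ B := fun i hi => by simpa using h9 hi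
    have e3 : ∀ i ∈ M, i ∈ R ∧ i ∉ A := fun i hi => by simpa using h3 hi
    have dU : Disjoint ((R \ A) \ M) (B \ G) := by rw [disjoint_left]; grind
    have dF : Disjoint M G := by rw [disjoint_left]; grind
    have dP : Disjoint N L := by rw [disjoint_left]; grind
    have q1 := card_sdiff_add_card_eq_card h1
    have q2 := card_sdiff_add_card_eq_card h3
    have q3 := card_sdiff_add_card_eq_card h11
    have q4 := card_sdiff_add_card_eq_card h5
    have cU := card_union_of_disjoint dU
    have cF := card_union_of_disjoint dF
    have cP := card_union_of_disjoint dP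
    have s1 : R \ (((R \ A) \ M) ∪ (B \ G) ∪ (M ∪ G)) = A := by ext i; grind
    have s2 : (((R \ A) \ M) ∪ (B \ G) ∪ (M ∪ G)) \ R = B := by ext i; grind
    have s3 : (N ∪ L) \ R = L := by ext i; grind
    have s4 : (M ∪ G) \ R = G := by ext i; grind
    have s5 : (((R \ A) \ M) ∪ (B \ G)) \ R = B \ G := by ext i; grind
    have s6 : R \ (((R \ A) \ M) ∪ (B \ G) ∪ (M ∪ G) ∪ (N ∪ L)) = A \ N := by ext i; grind
    simp only [eaedD, eaedJ, coe_filter, Set.mem_ofPred_eq, mem_filter, mem_univ, true_and,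
      Prod.mk.injEq, s1, s2, s3, s4, s5, s6]
    refine ⟨⟨?_, ?_, ?_, ?_, ?_, ?_, ?_, ?_⟩, ⟨h2, h8⟩, h10, h12⟩
    · rw [disjoint_left]; grind
    · rw [disjoint_left]; grind
    · rw [disjoint_left]; grind
    all_goals omega
  · rintro ⟨U, F, P⟩ hT
    simp only [eaedD, coe_filter, Set.mem_ofPred_eq, mem_filter, mem_univ, true_and,
      Prod.mk.injEq] at hT
    obtain ⟨⟨h1, h2, h3, -⟩, -⟩ := hT
    rw [disjoint_left] at h1 h2 h3
    simp only [eaedI, eaedJ, Prod.mk.injEq]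
    refine ⟨?_, ?_, ?_⟩ <;> ext i <;> grind
  · rintro ⟨⟨A, M, N⟩, ⟨B, L, G⟩⟩ hT
    simp only [mem_coe, mem_product, eaedTrip, mem_filter, mem_univ, true_and] at hT
    obtain ⟨⟨h1, h2, h3, h4, h5, h6⟩, h7, h8, h9, h10, h11, h12⟩ := hT
    have e1 : ∀ i ∈ B, i ∉ R := fun i hi => by simpa using h7 hi
    have e2 : ∀ i ∈ L, i ∉ R ∧ i ∉ B := fun i hi => by simpa using h9 hi
    have e3 : ∀ i ∈ M, i ∈ R ∧ i ∉ A := fun i hi => by simpa using h3 hi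
    simp only [eaedI, eaedJ, Prod.mk.injEq]
    refine ⟨⟨?_, ?_, ?_⟩, ?_, ?_, ?_⟩ <;> ext i <;> grind

theorem eaedD_card {n : ℕ} (R : Finset (Fin n)) (t u e e₁ r : ℕ) (hR : R.card = r) :
    (eaedD R t u e e₁).card =
        ∑ ab ∈ (Finset.range (t + 1) ×ˢ Finset.range (t + 1)).filter
            (fun ab => ab.1 + ab.2 ≤ t ∧
              (r : ℤ) + ab.2 = u + e - e₁ + ab.1),
          ∑ lg ∈ (Finset.range (n + 1) ×ˢ Finset.range (n + 1)).filter
              (fun lg =>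
                ((lg.1 : ℤ) ≤ n - r - ab.2 ∧ (e₁ : ℤ) - lg.1 ≤ ab.1) ∧
                ((lg.2 : ℤ) ≤ ab.2 ∧ (e : ℤ) - e₁ - lg.2 ≤ (r : ℤ) - ab.1) ∧
                ((ab.2 : ℤ) - lg.2 + ((ab.1 : ℤ) - ((e₁ : ℤ) - lg.1)) = u)),
            r.choose ab.1 * (n - r).choose ab.2 * (n - r - ab.2).choose lg.1 *
              ab.2.choose lg.2 * chooseZ (r - ab.1) ((e : ℤ) - e₁ - lg.2) *
              chooseZ ab.1 ((e₁ : ℤ) - lg.1) := by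
  have hRn : R.card + Rᶜ.card = n := by rw [card_add_card_compl, Fintype.card_fin]
  rw [card_eq_sum_card_fiberwise
    (f := fun T => ((R \ (T.1 ∪ T.2.1)).card, ((T.1 ∪ T.2.1) \ R).card))
    (t := (Finset.range (t + 1) ×ˢ Finset.range (t + 1)).filter
            (fun ab => ab.1 + ab.2 ≤ t ∧ (r : ℤ) + ab.2 = u + e - e₁ + ab.1))]
  · apply sum_congr rfl
    rintro ⟨a, b⟩ hab
    simp only [mem_filter, mem_product, mem_range] at hab
    rw [card_eq_sum_card_fiberwise
      (f := fun T => ((T.2.2 \ R).card, (T.2.1 \ R).card))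
      (t := (Finset.range (n + 1) ×ˢ Finset.range (n + 1)).filter
              (fun lg =>
                ((lg.1 : ℤ) ≤ n - r - b ∧ (e₁ : ℤ) - lg.1 ≤ a) ∧
                ((lg.2 : ℤ) ≤ b ∧ (e : ℤ) - e₁ - lg.2 ≤ (r : ℤ) - a) ∧
                ((b : ℤ) - lg.2 + ((a : ℤ) - ((e₁ : ℤ) - lg.1)) = u)))]
    · apply sum_congr rfl
      rintro ⟨l, g⟩ hlg
      simp only [mem_filter, mem_product, mem_range] at hlg
      rw [filter_filter]
      by_cases hc : e₁ + g ≤ e ∧ l ≤ e₁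
      · obtain ⟨m, hm⟩ := Nat.exists_eq_add_of_le hc.1
        obtain ⟨k, hk⟩ := Nat.exists_eq_add_of_le hc.2
        rw [eaed_fiber R t u e e₁ a b l g m k (by omega) (by omega) (by omega) (by omega)
          (by omega), card_product, eaedTrip_card, eaedTrip_card]
        have z1 : (e : ℤ) - e₁ - g = m := by omega
        have z2 : (e₁ : ℤ) - l = k := by omega
        have z3 : Rᶜ.card = n - r := by omega
        simp only [z1, z2, z3, hR, chooseZ, Int.natCast_nonneg, if_true, Int.toNat_natCast]
        ring
      · have hz : chooseZ (r - a) ((e : ℤ) - e₁ - g) * chooseZ a ((e₁ : ℤ) - l) = 0 := by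
          by_cases h1 : e₁ + g ≤ e
          · rw [chooseZ, chooseZ, if_neg (c := (0 : ℤ) ≤ (e₁ : ℤ) - l) (by omega), mul_zero]
          · rw [chooseZ, if_neg (by omega), zero_mul]
        simp only [mul_assoc, hz, mul_zero]
        rw [card_eq_zero, filter_eq_empty_iff]
        rintro ⟨U, F, P⟩ hT
        simp only [eaedD, mem_filter, mem_univ, true_and] at hT
        obtain ⟨h1, h2, h3, h4, h5, h6, h7, h8⟩ := hT
        have := eaed_cards R U F P h1 h2 h3
        simp only [Prod.mk.injEq]
        omega
    · rintro ⟨U, F, P⟩ hT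
      simp only [eaedD, coe_filter, Set.mem_ofPred_eq, mem_filter, mem_univ, true_and,
        Prod.mk.injEq] at hT
      obtain ⟨⟨h1, h2, h3, h4, h5, h6, h7, h8⟩, h9, h10⟩ := hT
      have := eaed_cards R U F P h1 h2 h3
      simp only [coe_filter, Set.mem_ofPred_eq, mem_product, mem_range]
      omega
  · rintro ⟨U, F, P⟩ hT
    simp only [eaedD, coe_filter, Set.mem_ofPred_eq, mem_filter, mem_univ, true_and] at hT
    obtain ⟨h1, h2, h3, h4, h5, h6, h7, h8⟩ := hT
    have := eaed_cards R U F P h1 h2 h3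
    simp only [coe_filter, Set.mem_ofPred_eq, mem_product, mem_range]
    omega

theorem eaed_z2 (x : ZMod 2) (h : x ≠ 0) : x = 1 := by
  revert x; decide

theorem eaed_z2' (x : ZMod 2) : 1 + x ≠ 0 ↔ x = 0 := by
  revert x; decide

/-- Support. -/
def eaedSupp {n : ℕ} (p : Fin n → ZMod 2) : Finset (Fin n) := univ.filter fun i => p i ≠ 0

theorem eaed_dist {n : ℕ} (x y : Fin n → ZMod 2) :
    hammingDist x y = (eaedSupp y \ eaedSupp x).card + (eaedSupp x \ eaedSupp y).card := by
  rw [← card_union_of_disjoint (by rw [disjoint_left]; grind), hammingDist]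
  congr 1
  ext i
  simp only [eaedSupp, mem_filter, mem_univ, true_and, mem_union, mem_sdiff]
  generalize x i = a
  generalize y i = b
  revert a b; decide

theorem eaed_supp_tp {n : ℕ} (U E : Finset (Fin n)) (p : Fin n → ZMod 2) :
    eaedSupp (testPattern2 U E p) = U ∪ (E \ eaedSupp p) := by
  ext i
  have hm : ∀ x : Fin n → ZMod 2, i ∈ eaedSupp x ↔ x i ≠ 0 := fun x => by simp [eaedSupp]
  simp only [hm, testPattern2, mem_union, mem_sdiff]
  by_cases h1 : i ∈ U
  · simp [h1]
  · by_cases h2 : i ∈ E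
    · simp [h1, h2, eaed_z2']
    · simp [h1, h2]

theorem eaed_erased {n : ℕ} (U E : Finset (Fin n)) (c : Fin n → ZMod 2) (h : Disjoint U E) :
    erasedDist U E c = (U \ eaedSupp c).card + (eaedSupp c \ (U ∪ E)).card := by
  rw [disjoint_left] at h
  rw [← card_union_of_disjoint (by rw [disjoint_left]; grind), erasedDist]
  congr 1
  ext i
  have h' := @h i
  simp only [eaedSupp, mem_filter, mem_univ, true_and, mem_union, mem_sdiff]
  by_cases h1 : i ∈ U
  · have h2 := h' h1
    simp only [h1, h2]
    generalize c i = a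
    revert a; decide
  · by_cases h2 : i ∈ E <;> simp [h1, h2]

theorem eaed_step {n : ℕ} (c : Fin n → ZMod 2) (t u e e₁ : ℕ) :
    (Finset.univ.filter
        (fun T : Finset (Fin n) × Finset (Fin n) × (Fin n → ZMod 2) =>
          T.1.card = u ∧ T.2.1.card = e ∧ Disjoint T.1 T.2.1 ∧
          (∀ i ∉ T.2.1, T.2.2 i = 0) ∧ hammingNorm T.2.2 = e₁ ∧
            hammingDist (testPattern2 T.1 T.2.1 T.2.2) c ≤ t ∧
            erasedDist T.1 T.2.1 c = u)).card = (eaedD (eaedSupp c) t u e e₁).card := by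
  apply card_nbij' (fun T => (T.1, T.2.1 \ eaedSupp T.2.2, eaedSupp T.2.2))
    (fun T => (T.1, T.2.1 ∪ T.2.2, fun i => if i ∈ T.2.2 then 1 else 0))
  · rintro ⟨U, E, p⟩ hT
    simp only [coe_filter, Set.mem_ofPred_eq, mem_univ, true_and] at hT
    obtain ⟨h1, h2, h3, h4, h5, h6, h7⟩ := hT
    rw [eaed_erased _ _ _ h3] at h7
    rw [eaed_dist, eaed_supp_tp] at h6
    have hs : eaedSupp p ⊆ E := by
      intro i hi
      by_contra hc
      simp [eaedSupp, h4 i hc] at hi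
    have e1 : U ∪ E \ eaedSupp p ∪ eaedSupp p = U ∪ E := by
      rw [union_assoc, sdiff_union_of_subset hs]
    simp only [eaedD, coe_filter, Set.mem_ofPred_eq, mem_univ, true_and, e1]
    refine ⟨?_, ?_, sdiff_disjoint, h1, ?_, h5, h6, h7⟩
    · exact h3.mono_right sdiff_subset
    · exact h3.mono_right hs
    · rw [card_sdiff_add_card_eq_card hs, h2]
  · rintro ⟨U, F, P⟩ hT
    simp only [eaedD, coe_filter, Set.mem_ofPred_eq, mem_univ, true_and] at hT
    obtain ⟨h1, h2, h3, h4, h5, h6, h7, h8⟩ := hT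
    have hs : eaedSupp (fun i => if i ∈ P then (1 : ZMod 2) else 0) = P := by
      ext i; simp [eaedSupp]
    have hd : Disjoint U (F ∪ P) := disjoint_union_right.2 ⟨h1, h2⟩
    have hF : (F ∪ P) \ P = F := by rw [union_sdiff_right, sdiff_eq_self_of_disjoint h3]
    simp only [coe_filter, Set.mem_ofPred_eq, mem_univ, true_and]
    rw [eaed_erased _ _ _ hd, eaed_dist, eaed_supp_tp, hs, hF, card_union_of_disjoint h3,
      ← union_assoc]
    refine ⟨h4, h5, hd, ?_, ?_, h7, h8⟩
    · intro i hi
      rw [mem_union, not_or] at hi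
      simp [hi.2]
    · change (eaedSupp (fun i => if i ∈ P then (1 : ZMod 2) else 0)).card = _
      rw [hs, h6]
  · rintro ⟨U, E, p⟩ hT
    simp only [coe_filter, Set.mem_ofPred_eq, mem_univ, true_and] at hT
    obtain ⟨h1, h2, h3, h4, h5, h6, h7⟩ := hT
    have hs : eaedSupp p ⊆ E := by
      intro i hi
      by_contra hc
      simp [eaedSupp, h4 i hc] at hi
    simp only [Prod.mk.injEq, sdiff_union_of_subset hs, true_and]
    funext i
    by_cases hp : p i = 0
    · simp [eaedSupp, hp]
    · simp [eaedSupp, eaed_z2 _ hp]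
  · rintro ⟨U, F, P⟩ hT
    simp only [eaedD, coe_filter, Set.mem_ofPred_eq, mem_univ, true_and] at hT
    obtain ⟨h1, h2, h3, h4, h5, h6, h7, h8⟩ := hT
    have hs : eaedSupp (fun i => if i ∈ P then (1 : ZMod 2) else 0) = P := by
      ext i; simp [eaedSupp]
    have hF : (F ∪ P) \ P = F := by rw [union_sdiff_right, sdiff_eq_self_of_disjoint h3]
    simp only [hs, hF]

end EaedAux

/-- For a binary linear code with minimum distance at least `2t+1`
and `u + e − e₁ > t`, the number of triples `(U, E, p)` for which some codeword `c`
of weight `r` satisfies `d(y⁽²⁾, c) ≤ t` and `d_E(c) = d_E(0) = u` equals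
`A_r · ∑_{(a,b) ∈ S_{a,b}} ∑_{(λ,γ) ∈ (S_λ × S_γ) ∩ S_=}
  C(r,a)·C(n−r,b)·C(n−r−b,λ)·C(b,γ)·C(r−a, e−e₁−γ)·C(a, e₁−λ)`. -/
theorem eaed_tie_count_L {n t : ℕ}
    (C : Submodule (ZMod 2) (Fin n → ZMod 2)) [DecidablePred (· ∈ C)]
    (hdmin : ∀ c ∈ C, c ≠ 0 → 2 * t + 1 ≤ hammingNorm c)
    (u e e₁ r : ℕ) (h : (t : ℤ) < u + e - e₁) :
    (Finset.univ.filter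
        (fun T : Finset (Fin n) × Finset (Fin n) × (Fin n → ZMod 2) =>
          T.1.card = u ∧ T.2.1.card = e ∧ Disjoint T.1 T.2.1 ∧
          (∀ i ∉ T.2.1, T.2.2 i = 0) ∧ hammingNorm T.2.2 = e₁ ∧
          ∃ c ∈ C, hammingNorm c = r ∧
            hammingDist (testPattern2 T.1 T.2.1 T.2.2) c ≤ t ∧
            erasedDist T.1 T.2.1 c = u)).card =
      (Finset.univ.filter
          (fun c : Fin n → ZMod 2 => c ∈ C ∧ hammingNorm c = r)).card *
        ∑ ab ∈ (Finset.range (t + 1) ×ˢ Finset.range (t + 1)).filter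
            (fun ab => ab.1 + ab.2 ≤ t ∧
              (r : ℤ) + ab.2 = u + e - e₁ + ab.1),
          ∑ lg ∈ (Finset.range (n + 1) ×ˢ Finset.range (n + 1)).filter
              (fun lg =>
                ((lg.1 : ℤ) ≤ n - r - ab.2 ∧ (e₁ : ℤ) - lg.1 ≤ ab.1) ∧
                ((lg.2 : ℤ) ≤ ab.2 ∧ (e : ℤ) - e₁ - lg.2 ≤ (r : ℤ) - ab.1) ∧
                ((ab.2 : ℤ) - lg.2 + ((ab.1 : ℤ) - ((e₁ : ℤ) - lg.1)) = u)),
            r.choose ab.1 * (n - r).choose ab.2 * (n - r - ab.2).choose lg.1 *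
              ab.2.choose lg.2 * chooseZ (r - ab.1) ((e : ℤ) - e₁ - lg.2) *
              chooseZ ab.1 ((e₁ : ℤ) - lg.1) := by
  classical
  rw [← smul_eq_mul, ← Finset.sum_const]
  have key : ∀ c ∈ Finset.univ.filter
      (fun c : Fin n → ZMod 2 => c ∈ C ∧ hammingNorm c = r), _ = _ := fun c hc =>
    (eaed_step c t u e e₁).trans
      (eaedD_card (eaedSupp c) t u e e₁ r (Finset.mem_filter.1 hc).2.2)
  rw [← Finset.sum_congr rfl key, ← Finset.card_biUnion]
  · congr 1
    ext T
    simp only [Finset.mem_filter, Finset.mem_univ, true_and, Finset.mem_biUnion]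
    constructor
    · rintro ⟨h1, h2, h3, h4, h5, c, h6, h7, h8, h9⟩
      exact ⟨c, ⟨h6, h7⟩, h1, h2, h3, h4, h5, h8, h9⟩
    · rintro ⟨c, ⟨h6, h7⟩, h1, h2, h3, h4, h5, h8, h9⟩
      exact ⟨h1, h2, h3, h4, h5, c, h6, h7, h8, h9⟩
  · intro c hc c' hc' hne
    rw [Function.onFun, Finset.disjoint_left]
    intro T hT hT'
    simp only [Finset.mem_filter, Finset.mem_univ, true_and, Finset.coe_filter,
      Set.mem_ofPred_eq] at hc hc' hT hT'
    have h1 := hdmin (-c + c') (C.add_mem (C.neg_mem hc.1) hc'.1)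
      (fun h0 => hne (neg_add_eq_zero.1 h0))
    rw [← hammingDist_eq_hammingNorm] at h1
    have h2 := hammingDist_triangle_left c c' (testPattern2 T.1 T.2.1 T.2.2)
    have h3 := hT.2.2.2.2.2.1
    have h4 := hT'.2.2.2.2.2.1
    omega
end
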